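/- Let k be an algebraically closed field of characteristic 0, with the group G = (k,+) × (k,+) acting on k[x₀,x₁,x₂,x₃] by (s,t): x₀ ↦ x₀, x₁ ↦ x₁ + s·x₀, x₂ ↦ x₂ + s·x₁ + (s²/2 + t)·x₀, x₃ ↦ x₃ + s·x₂ + (s²/2 + t)·x₁ + (s³/6 + s·t)·x₀. Then the least positive degree of a G-invariant homogeneous polynomial h with h(0,1,0,0) ≠ 0 equals 3; in particular f = x₁³ − 3x₀x₁x₂ + 3x₀²x₃ is a G-invariant homogeneous polynomial of degree 3 with f(0,1,0,0) = 1, and no G-invariant homogeneous polynomial of degree 1 or 2 is nonzero at (0,1,0,0). -/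

import Mathlib

open MvPolynomial

/-- For `(s,t) ∈ k × k`, the `k`-algebra automorphism of `k[x₀,x₁,x₂,x₃]` given by
`x₀ ↦ x₀`, `x₁ ↦ x₁ + s·x₀`, `x₂ ↦ x₂ + s·x₁ + (s²/2 + t)·x₀`,
`x₃ ↦ x₃ + s·x₂ + (s²/2 + t)·x₁ + (s³/6 + s·t)·x₀`; these automorphisms define an action of
the group `(k,+) × (k,+)`. -/
noncomputable def g2Subst (k : Type*) [Field k] (s t : k) :
    MvPolynomial (Fin 4) k →ₐ[k] MvPolynomial (Fin 4) k :=
  MvPolynomial.aeval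
    ![MvPolynomial.X 0,
      MvPolynomial.X 1 + MvPolynomial.C s * MvPolynomial.X 0,
      MvPolynomial.X 2 + MvPolynomial.C s * MvPolynomial.X 1 +
        MvPolynomial.C (s ^ 2 / 2 + t) * MvPolynomial.X 0,
      MvPolynomial.X 3 + MvPolynomial.C s * MvPolynomial.X 2 +
        MvPolynomial.C (s ^ 2 / 2 + t) * MvPolynomial.X 1 +
        MvPolynomial.C (s ^ 3 / 6 + s * t) * MvPolynomial.X 0]

/-- The invariant `f = x₁³ − 3·x₀·x₁·x₂ + 3·x₀²·x₃`. -/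
noncomputable def g2Inv (k : Type*) [Field k] : MvPolynomial (Fin 4) k :=
  MvPolynomial.X 1 ^ 3 -
    MvPolynomial.C 3 * MvPolynomial.X 0 * MvPolynomial.X 1 * MvPolynomial.X 2 +
    MvPolynomial.C 3 * MvPolynomial.X 0 ^ 2 * MvPolynomial.X 3

/-- Homogeneity in terms of evaluations. -/
theorem g2_eval_smul {k : Type*} [Field k] {h : MvPolynomial (Fin 4) k} {e : ℕ}
    (hh : h.IsHomogeneous e) (r : k) (x : Fin 4 → k) :
    MvPolynomial.eval (fun i => r * x i) h = r ^ e * MvPolynomial.eval x h := by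
  rw [MvPolynomial.eval_eq, MvPolynomial.eval_eq, Finset.mul_sum]
  refine Finset.sum_congr rfl fun d hd => ?_
  have h1 := hh (MvPolynomial.mem_support_iff.mp hd)
  rw [Finsupp.weight_apply, Finsupp.sum] at h1
  simp only [mul_pow, Finset.prod_mul_distrib, Finset.prod_pow_eq_pow_sum]
  have h2 : ∑ i ∈ d.support, d i = e := by simpa using h1
  rw [h2]; ring

/-- The point `(a,1,0,0)` lies in the orbit of `(a,0,0,1/(3a²))`. -/
theorem g2_key {k : Type*} [Field k] [CharZero k] {h : MvPolynomial (Fin 4) k} {e : ℕ}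
    (hinv : ∀ s t : k, g2Subst k s t h = h)
    (hh : h.IsHomogeneous e) (a : k) (ha : a ≠ 0) :
    a ^ (2 * e) * MvPolynomial.eval (![a, 1, 0, 0] : Fin 4 → k) h =
      MvPolynomial.eval (![a ^ 3, 0, 0, 1 / 3] : Fin 4 → k) h := by
  have h1 := congrArg (MvPolynomial.eval (![a, 1, 0, 0] : Fin 4 → k))
    (hinv (-1 / a) (1 / (2 * a ^ 2)))
  have h2 : ∀ p : MvPolynomial (Fin 4) k, MvPolynomial.eval (![a, 1, 0, 0] : Fin 4 → k)
      (g2Subst k (-1 / a) (1 / (2 * a ^ 2)) p) =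
      MvPolynomial.eval (![a, 0, 0, 1 / (3 * a ^ 2)] : Fin 4 → k) p := by
    intro p
    induction p using MvPolynomial.induction_on with
    | C c => simp [g2Subst]
    | add p q hp hq => simp only [map_add, hp, hq]
    | mul_X p i hp =>
      simp only [map_mul, hp]
      congr 1
      fin_cases i <;> simp [g2Subst] <;> field_simp <;> ring
  rw [← h1, h2, pow_mul, ← g2_eval_smul hh]
  congr 2
  funext i
  fin_cases i <;> simp <;> field_simp

theorem g2_three_dvd {k : Type*} [Field k] [CharZero k] {h : MvPolynomial (Fin 4) k} {e : ℕ}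
    (hinv : ∀ s t : k, g2Subst k s t h = h) (hh : h.IsHomogeneous e)
    (hne : MvPolynomial.eval (![0, 1, 0, 0] : Fin 4 → k) h ≠ 0) : 3 ∣ 2 * e := by
  by_contra hd
  set P : Polynomial k := MvPolynomial.aeval
    (![Polynomial.X, 1, 0, 0] : Fin 4 → Polynomial k) h with hP
  set Q : Polynomial k := MvPolynomial.aeval
    (![Polynomial.X, 0, 0, Polynomial.C (1 / 3)] : Fin 4 → Polynomial k) h with hQ
  have eP : ∀ a : k, P.eval a = MvPolynomial.eval (![a, 1, 0, 0] : Fin 4 → k) h := by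
    intro a
    rw [hP, ← Polynomial.coe_aeval_eq_eval, MvPolynomial.comp_aeval_apply,
      MvPolynomial.aeval_eq_eval]
    congr 2
    funext i
    fin_cases i <;> simp
  have eQ : ∀ a : k, Q.eval a = MvPolynomial.eval (![a, 0, 0, 1 / 3] : Fin 4 → k) h := by
    intro a
    rw [hQ, ← Polynomial.coe_aeval_eq_eval, MvPolynomial.comp_aeval_apply,
      MvPolynomial.aeval_eq_eval]
    congr 2
    funext i
    fin_cases i <;> simp
  have key : Polynomial.X * (P * Polynomial.X ^ (2 * e)) =
      Polynomial.X * Polynomial.expand k 3 Q := by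
    apply Polynomial.funext
    intro a
    by_cases ha : a = 0
    · simp [ha]
    · simp only [Polynomial.eval_mul, Polynomial.eval_X, Polynomial.eval_pow,
        Polynomial.expand_eval, eP, eQ]
      rw [← g2_key hinv hh a ha]; ring
  have key2 := mul_left_cancel₀ Polynomial.X_ne_zero key
  have h3 := congrArg (fun p => Polynomial.coeff p (2 * e)) key2
  simp only [Polynomial.coeff_mul_X_pow', Polynomial.coeff_expand (by norm_num : 0 < 3),
    if_neg hd, le_refl, if_true, Nat.sub_self, Polynomial.coeff_zero_eq_eval_zero, eP] at h3
  exact hne h3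

theorem g2Inv_invariant (k : Type*) [Field k] [CharZero k] (s t : k) :
    g2Subst k s t (g2Inv k) = g2Inv k := by
  apply MvPolynomial.funext
  intro x
  simp [g2Subst, g2Inv]
  field_simp
  ring

theorem g2Inv_homogeneous (k : Type*) [Field k] : (g2Inv k).IsHomogeneous 3 := by
  have hX := fun i : Fin 4 => MvPolynomial.isHomogeneous_X k i
  have hC := MvPolynomial.isHomogeneous_C (Fin 4) (3 : k)
  refine MvPolynomial.IsHomogeneous.add (MvPolynomial.IsHomogeneous.sub ?_ ?_) ?_
  · simpa using (hX 1).pow 3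
  · simpa using ((hC.mul (hX 0)).mul (hX 1)).mul (hX 2)
  · simpa using (hC.mul ((hX 0).pow 2)).mul (hX 3)

theorem g2Inv_eval (k : Type*) [Field k] :
    MvPolynomial.eval (![0, 1, 0, 0] : Fin 4 → k) (g2Inv k) = 1 := by
  simp [g2Inv]

/-- Let `k` be an algebraically closed field of characteristic `0`, with
`G = (k,+) × (k,+)` acting on `k[x₀,x₁,x₂,x₃]` by the automorphisms `g2Subst k s t`. Then the
least positive degree of a `G`-invariant homogeneous polynomial `h` with `h(0,1,0,0) ≠ 0`
equals `3`; in particular `f = x₁³ − 3x₀x₁x₂ + 3x₀²x₃` is a `G`-invariant homogeneous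
polynomial of degree `3` with `f(0,1,0,0) = 1` (and no `G`-invariant homogeneous polynomial of
degree `1` or `2` is nonzero at `(0,1,0,0)`). -/
theorem isLeast_degree_g2_invariant_eq_three
    (k : Type*) [Field k] [IsAlgClosed k] [CharZero k] :
    IsLeast {e : ℕ | 0 < e ∧ ∃ h : MvPolynomial (Fin 4) k,
        (∀ s t : k, g2Subst k s t h = h) ∧ h.IsHomogeneous e ∧
        MvPolynomial.eval (![0, 1, 0, 0] : Fin 4 → k) h ≠ 0}
      3 ∧
    (∀ s t : k, g2Subst k s t (g2Inv k) = g2Inv k) ∧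
    (g2Inv k).IsHomogeneous 3 ∧
    MvPolynomial.eval (![0, 1, 0, 0] : Fin 4 → k) (g2Inv k) = 1 := by
  refine ⟨⟨⟨by norm_num, g2Inv k, g2Inv_invariant k, g2Inv_homogeneous k, ?_⟩, ?_⟩,
    g2Inv_invariant k, g2Inv_homogeneous k, g2Inv_eval k⟩
  · rw [g2Inv_eval]; exact one_ne_zero
  · rintro e ⟨he, h, hinv, hh, hne⟩
    have := g2_three_dvd hinv hh hne
    omega
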